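/- Let m ∈ ℕ₀ be even and let a > 0. Then the function Ω(x) = β^(m)(a)/β^(m)(x + a) is increasing and logarithmically concave on (0, ∞), and for every x > 0 the strict inequality 1 < β^(m)(a)/β^(m)(x + a) holds (equivalently β^(m)(x + a) < β^(m)(a)). -/

import Mathlib

/-!
Up to the substitution `X t = -t`, Nielsen's `β` is the moment generating function of the measure
`ν` on `(0, ∞)` with density `1 / (1 + e^{-t})`; hence, for `x > 0`,
`β^(m)(x) = ∫ (-t)^m e^{-x t} dν(t)`. For even `m` the weight `(-t)^m` is positive, so `β^(m)` is
positive and strictly decreasing on `(0, ∞)`, as the integrand is. It is also log-convex: for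
`p + q = 1` and any constants `A`, `B`, convexity of `exp` gives
`e^{-(p x + q y) t - (p A + q B)} ≤ p e^{-x t - A} + q e^{-y t - B}`, and choosing
`A = log β^(m)(x)`, `B = log β^(m)(y)` makes the right-hand side integrate to `1` against
`(-t)^m dν(t)`. All claims about the ratio `β^(m)(a) / β^(m)(x + a)` follow.
-/

open Real MeasureTheory Set

/-- Nielsen's beta function: `β(x) = ∫₀^∞ e^{-x t} / (1 + e^{-t}) dt`. -/
noncomputable def nielsenBeta (x : ℝ) : ℝ :=
  ∫ t in Set.Ioi (0:ℝ), Real.exp (-x * t) / (1 + Real.exp (-t))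

open ProbabilityTheory

/-- The measure on `(0, ∞)` with density `1 / (1 + e^{-t})`, regarded as a measure on `ℝ`. -/
noncomputable def nielsenMeasure : Measure ℝ :=
  (volume.restrict (Ioi 0)).withDensity fun t => ENNReal.ofReal (1 / (1 + exp (-t)))

lemma nielsenMeasure_measurable :
    Measurable fun t : ℝ => ENNReal.ofReal (1 / (1 + exp (-t))) := by
  fun_prop

lemma nielsenMeasure_ae_pos : ∀ᵐ t ∂nielsenMeasure, 0 < t :=
  (withDensity_absolutelyContinuous _ _).ae_le (ae_restrict_mem measurableSet_Ioi)

lemma nielsenMeasure_ne_zero : nielsenMeasure ≠ 0 := by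
  intro h
  rw [nielsenMeasure, withDensity_eq_zero_iff nielsenMeasure_measurable.aemeasurable] at h
  have h_false : ∀ᵐ t ∂(volume.restrict (Ioi (0 : ℝ))), False := by
    filter_upwards [h] with t ht
    have h1 : 0 < 1 / (1 + exp (-t)) := by positivity
    simp only [Pi.zero_apply, ENNReal.ofReal_eq_zero] at ht
    linarith
  rw [Filter.eventually_false_iff_eq_bot, ae_eq_bot, Measure.restrict_eq_zero] at h_false
  simp at h_false

lemma nielsenBeta_eq_mgf : nielsenBeta = mgf (fun t => -t) nielsenMeasure := by
  ext x
  rw [mgf, nielsenMeasure, integral_withDensity_eq_integral_toReal_smul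
    nielsenMeasure_measurable (ae_of_all _ fun _ => ENNReal.ofReal_lt_top), nielsenBeta]
  refine integral_congr_ae (ae_of_all _ fun t => ?_)
  have h1 : 0 ≤ 1 / (1 + exp (-t)) := by positivity
  simp only [ENNReal.toReal_ofReal h1, smul_eq_mul, mul_neg, neg_mul]
  ring

lemma Ioi_subset_interior_integrableExpSet :
    Ioi 0 ⊆ interior (integrableExpSet (fun t => -t) nielsenMeasure) := by
  refine interior_maximal (fun x hx => ?_) isOpen_Ioi
  change Integrable _ _
  rw [nielsenMeasure, integrable_withDensity_iff_integrable_smul' nielsenMeasure_measurable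
    (ae_of_all _ fun _ => ENNReal.ofReal_lt_top)]
  refine Integrable.mono' (exp_neg_integrableOn_Ioi 0 hx) (by fun_prop) (ae_of_all _ fun t => ?_)
  have h1 : 0 ≤ 1 / (1 + exp (-t)) := by positivity
  have h2 : 1 / (1 + exp (-t)) ≤ 1 := by
    rw [div_le_one (by positivity)]
    linarith [exp_pos (-t)]
  rw [ENNReal.toReal_ofReal h1, smul_eq_mul, norm_of_nonneg (by positivity), mul_neg, neg_mul]
  exact mul_le_of_le_one_left (exp_pos _).le h2

lemma iteratedDeriv_nielsenBeta (m : ℕ) {x : ℝ} (hx : 0 < x) :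
    iteratedDeriv m nielsenBeta x = ∫ t, (-t) ^ m * exp (x * -t) ∂nielsenMeasure := by
  rw [nielsenBeta_eq_mgf, iteratedDeriv_mgf (Ioi_subset_interior_integrableExpSet hx)]

lemma integrable_pow_mul_exp_nielsenMeasure (m : ℕ) {x : ℝ} (hx : 0 < x) :
    Integrable (fun t => (-t) ^ m * exp (x * -t)) nielsenMeasure :=
  integrable_pow_mul_exp_of_mem_interior_integrableExpSet
    (Ioi_subset_interior_integrableExpSet hx) m

lemma integral_nielsenMeasure_pos {f : ℝ → ℝ} (hf : Integrable f nielsenMeasure)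
    (h : ∀ t, 0 < t → 0 < f t) : 0 < ∫ t, f t ∂nielsenMeasure := by
  have h_pos : ∀ᵐ t ∂nielsenMeasure, 0 < f t := nielsenMeasure_ae_pos.mono h
  refine (integral_nonneg_of_ae (h_pos.mono fun t ht => ht.le)).lt_of_ne fun h0 => ?_
  have h_zero := (integral_eq_zero_iff_of_nonneg_ae (h_pos.mono fun t ht => ht.le) hf).1 h0.symm
  have h_false : ∀ᵐ t ∂nielsenMeasure, False := by
    filter_upwards [h_pos, h_zero] with t h1 h2
    exact h1.ne' h2
  rw [Filter.eventually_false_iff_eq_bot, ae_eq_bot] at h_false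
  exact nielsenMeasure_ne_zero h_false

lemma iteratedDeriv_nielsenBeta_pos {m : ℕ} (hm : Even m) {x : ℝ} (hx : 0 < x) :
    0 < iteratedDeriv m nielsenBeta x := by
  rw [iteratedDeriv_nielsenBeta m hx]
  exact integral_nielsenMeasure_pos (integrable_pow_mul_exp_nielsenMeasure m hx) fun t ht =>
    mul_pos (hm.pow_pos (by linarith)) (exp_pos _)

lemma iteratedDeriv_nielsenBeta_strictAntiOn {m : ℕ} (hm : Even m) :
    StrictAntiOn (iteratedDeriv m nielsenBeta) (Ioi 0) := by
  intro x hx y hy hxy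
  have hix := integrable_pow_mul_exp_nielsenMeasure m hx
  have hiy := integrable_pow_mul_exp_nielsenMeasure m hy
  rw [iteratedDeriv_nielsenBeta m hx, iteratedDeriv_nielsenBeta m hy, ← sub_pos,
    ← integral_sub hix hiy]
  refine integral_nielsenMeasure_pos (hix.sub hiy) fun t ht => ?_
  rw [sub_pos]
  refine mul_lt_mul_of_pos_left (exp_lt_exp.2 ?_) (hm.pow_pos (by linarith))
  nlinarith

lemma convexOn_log_iteratedDeriv_nielsenBeta {m : ℕ} (hm : Even m) :
    ConvexOn ℝ (Ioi 0) fun x => log (iteratedDeriv m nielsenBeta x) := by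
  refine ⟨convex_Ioi 0, fun x hx y hy p q hp hq hpq => ?_⟩
  have hz : p • x + q • y ∈ Ioi (0 : ℝ) := convex_Ioi 0 hx hy hp hq hpq
  have hFx := iteratedDeriv_nielsenBeta_pos hm hx
  have hFy := iteratedDeriv_nielsenBeta_pos hm hy
  have hFz := iteratedDeriv_nielsenBeta_pos hm hz
  simp only [smul_eq_mul] at hz hFz ⊢
  set A := log (iteratedDeriv m nielsenBeta x) with hA
  set B := log (iteratedDeriv m nielsenBeta y) with hB
  have h_int : ∫ t, exp (-(p * A + q * B)) * ((-t) ^ m * exp ((p * x + q * y) * -t))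
        ∂nielsenMeasure ≤
      ∫ t, (p * exp (-A) * ((-t) ^ m * exp (x * -t)) +
        q * exp (-B) * ((-t) ^ m * exp (y * -t))) ∂nielsenMeasure := by
    refine integral_mono ((integrable_pow_mul_exp_nielsenMeasure m hz).const_mul _)
      (((integrable_pow_mul_exp_nielsenMeasure m hx).const_mul _).add
        ((integrable_pow_mul_exp_nielsenMeasure m hy).const_mul _)) fun t => ?_
    -- Subtracting the logarithms inside `exp` normalises both integrals to `1`, so that pointwise
    -- convexity of `exp` replaces Hölder's inequality.
    have h_conv := convexOn_exp.2 (mem_univ (-A + x * -t)) (mem_univ (-B + y * -t)) hp hq hpq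
    simp only [smul_eq_mul] at h_conv
    have h_exp : p * (-A + x * -t) + q * (-B + y * -t) =
        -(p * A + q * B) + (p * x + q * y) * -t := by ring
    rw [h_exp, exp_add, exp_add, exp_add] at h_conv
    have h_mul := mul_le_mul_of_nonneg_left h_conv (hm.pow_nonneg (-t))
    dsimp only
    linarith
  rw [integral_add ((integrable_pow_mul_exp_nielsenMeasure m hx).const_mul _)
    ((integrable_pow_mul_exp_nielsenMeasure m hy).const_mul _), integral_const_mul,
    integral_const_mul, integral_const_mul, ← iteratedDeriv_nielsenBeta m hx,
    ← iteratedDeriv_nielsenBeta m hy, ← iteratedDeriv_nielsenBeta m hz, hA, hB, exp_neg (log _),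
    exp_neg (log _), exp_log hFx, exp_log hFy, ← hA, ← hB, mul_assoc p, mul_assoc q,
    inv_mul_cancel₀ hFx.ne', inv_mul_cancel₀ hFy.ne', mul_one, mul_one, hpq, exp_neg,
    inv_mul_le_iff₀ (exp_pos _), mul_one] at h_int
  exact (log_le_iff_le_exp hFz).2 h_int

theorem iteratedDeriv_nielsenBeta_ratio_shift (m : ℕ) (hm : Even m) (a : ℝ) (ha : 0 < a) :
    MonotoneOn
        (fun x : ℝ => iteratedDeriv m nielsenBeta a / iteratedDeriv m nielsenBeta (x + a))
        (Set.Ioi 0) ∧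
      ConcaveOn ℝ (Set.Ioi 0)
        (fun x : ℝ =>
          Real.log (iteratedDeriv m nielsenBeta a / iteratedDeriv m nielsenBeta (x + a))) ∧
      ∀ x : ℝ, 0 < x →
        1 < iteratedDeriv m nielsenBeta a / iteratedDeriv m nielsenBeta (x + a) := by
  have h_anti := iteratedDeriv_nielsenBeta_strictAntiOn hm
  have h_pos : ∀ x : ℝ, 0 < x → 0 < iteratedDeriv m nielsenBeta (x + a) := fun x hx =>
    iteratedDeriv_nielsenBeta_pos hm (add_pos hx ha)
  have hFa := iteratedDeriv_nielsenBeta_pos hm ha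
  refine ⟨fun x hx y hy hxy => ?_, ⟨convex_Ioi 0, fun x hx y hy p q hp hq hpq => ?_⟩,
    fun x hx => ?_⟩
  · exact div_le_div_of_nonneg_left hFa.le (h_pos y hy)
      (h_anti.antitoneOn (add_pos hx ha) (add_pos hy ha) (by linarith))
  · have hz : p • x + q • y ∈ Ioi (0 : ℝ) := convex_Ioi 0 hx hy hp hq hpq
    have h_conv := (convexOn_log_iteratedDeriv_nielsenBeta hm).2
      (show x + a ∈ Ioi 0 from add_pos hx ha) (show y + a ∈ Ioi 0 from add_pos hy ha) hp hq hpq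
    have h_shift : p • (x + a) + q • (y + a) = p • x + q • y + a := by
      simp only [smul_eq_mul]
      linear_combination a * hpq
    dsimp only at h_conv ⊢
    rw [h_shift] at h_conv
    rw [log_div hFa.ne' (h_pos x hx).ne', log_div hFa.ne' (h_pos y hy).ne',
      log_div hFa.ne' (h_pos _ hz).ne']
    have h_const : p * log (iteratedDeriv m nielsenBeta a) +
        q * log (iteratedDeriv m nielsenBeta a) = log (iteratedDeriv m nielsenBeta a) := by
      rw [← add_mul, hpq, one_mul]
    simp only [smul_eq_mul] at h_conv ⊢
    linarith
  · rw [one_lt_div (h_pos x hx)]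
    exact h_anti ha (add_pos hx ha) (by linarith)
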